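/- Let $A$ be an $n\times n$ row-stochastic matrix whose associated directed graph (edge from $j$ to $i$ whenever $A[i,j]>0$) is strongly connected and which has at least one strictly positive diagonal entry, and let $\gamma_1,\dots,\gamma_p$ be strictly positive reals summing to $1$. Then the $np\times np$ block matrix $\tilde{A}$ is primitive: there exists $m \ge 1$ such that every entry of $\tilde{A}^m$ is strictly positive. -/

import Mathlib

/-!
Entry `(i, j)` of the `k`-th power of a nonnegative matrix is positive exactly when its graph has a
walk of length `k` from `i` to `j`. A positive diagonal entry is a loop; if the graph is strongly
connected, any two vertices are joined by a walk through it, and idling on the loop realises every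
sufficiently large length, so an irreducible matrix with a positive diagonal entry is primitive.
In the block matrix every layer carries a copy of the graph of `A`, and one can change layers in
one step, so irreducibility and the loop are inherited from `A`.
-/

open Filter Matrix

theorem length_mapPath {V W : Type*} [Quiver V] [Quiver W] (F : V ⥤q W) {a b : V}
    (p : Quiver.Path a b) : (F.mapPath p).length = p.length := by
  induction p with
  | nil => rfl
  | cons _ _ ih => exact congrArg (· + 1) ih

section PowerEntries

variable {R n : Type*} [Semiring R] [PartialOrder R] [IsStrictOrderedRing R] [Fintype n]
  [DecidableEq n] {A : Matrix n n R}

theorem pow_add_apply_pos (hA : ∀ i j, 0 ≤ A i j) {k l : ℕ} {i j m : n}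
    (hij : 0 < (A ^ k) i j) (hjm : 0 < (A ^ l) j m) : 0 < (A ^ (k + l)) i m := by
  rw [pow_add, mul_apply]
  exact Finset.sum_pos'
    (fun x _ ↦ mul_nonneg (pow_apply_nonneg hA k i x) (pow_apply_nonneg hA l x m))
    ⟨j, Finset.mem_univ j, mul_pos hij hjm⟩

theorem pow_apply_self_pos (hA : ∀ i j, 0 ≤ A i j) {i : n} (hi : 0 < A i i) (k : ℕ) :
    0 < (A ^ k) i i := by
  induction k with
  | zero => simp
  | succ k ih => exact pow_add_apply_pos hA ih (by simpa using hi)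

end PowerEntries

section Walks

variable {R n : Type*} [Ring R] [LinearOrder R] [IsStrictOrderedRing R] [Fintype n] [DecidableEq n]
  {A : Matrix n n R}

theorem pow_apply_pos_of_map {m : Type*} [Fintype m] [DecidableEq m] {B : Matrix m m R}
    (hA : ∀ i j, 0 ≤ A i j) (hB : ∀ i j, 0 ≤ B i j) {f : n → m}
    (hf : ∀ i j, 0 < A i j → 0 < B (f i) (f j)) {k : ℕ} {i j : n} (h : 0 < (A ^ k) i j) :
    0 < (B ^ k) (f i) (f j) := by
  let := A.toQuiver
  let := B.toQuiver
  let F : n ⥤q m := { obj := f, map := fun e ↦ ⟨hf _ _ e.down⟩ }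
  obtain ⟨p, hp⟩ := (pow_apply_pos_iff_nonempty_path hA k i j).1 h
  exact (pow_apply_pos_iff_nonempty_path hB k (f i) (f j)).2
    ⟨F.mapPath p, (length_mapPath F p).trans hp⟩

theorem eventually_pow_apply_pos_of_isIrreducible (hA : A.IsIrreducible) {v : n}
    (hv : 0 < A v v) (i j : n) : ∀ᶠ k in atTop, 0 < (A ^ k) i j := by
  have exists_walk := (isIrreducible_iff_exists_pow_pos hA.nonneg).1 hA
  obtain ⟨a, -, hiv⟩ := exists_walk i v
  obtain ⟨b, -, hvj⟩ := exists_walk v j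
  filter_upwards [eventually_ge_atTop (a + b)] with k hk
  obtain ⟨c, rfl⟩ := Nat.exists_eq_add_of_le hk
  have walk : 0 < (A ^ (a + c + b)) i j :=
    pow_add_apply_pos hA.nonneg (pow_add_apply_pos hA.nonneg hiv
      (pow_apply_self_pos hA.nonneg hv c)) hvj
  rwa [add_right_comm] at walk

theorem isPrimitive_of_isIrreducible_of_apply_self_pos (hA : A.IsIrreducible) {v : n}
    (hv : 0 < A v v) : A.IsPrimitive := by
  have eventually_pos : ∀ᶠ k in atTop, ∀ i j, 0 < (A ^ k) i j :=
    eventually_all.2 fun i ↦ eventually_all.2 fun j ↦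
      eventually_pow_apply_pos_of_isIrreducible hA hv i j
  exact ⟨hA.nonneg, ((eventually_gt_atTop 0).and eventually_pos).exists⟩

end Walks

/-- The block matrix `Ã` on `ι` copies ("layers") of the index set of `A`: from `(l, i)`, follow `A`
inside layer `l` with weight `γ l`, or jump to the copy of `i` in another layer `k` with weight
`γ k`. -/
def layeredMatrix {R ι n : Type*} [Mul R] [Zero R] [DecidableEq ι] [DecidableEq n]
    (γ : ι → R) (A : Matrix n n R) : Matrix (ι × n) (ι × n) R :=
  of fun li kj ↦
    if kj.1 = li.1 then γ li.1 * A li.2 kj.2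
    else if kj.2 = li.2 then γ kj.1 else 0

namespace layeredMatrix

section Entries

variable {R ι n : Type*} [DecidableEq ι] [DecidableEq n]

theorem apply_same_layer [Mul R] [Zero R] (γ : ι → R) (A : Matrix n n R) (l : ι) (i j : n) :
    layeredMatrix γ A (l, i) (l, j) = γ l * A i j := by
  simp [layeredMatrix]

theorem apply_of_ne_layer [Mul R] [Zero R] (γ : ι → R) (A : Matrix n n R) {k l : ι}
    (hkl : k ≠ l) (i : n) : layeredMatrix γ A (l, i) (k, i) = γ k := by
  simp [layeredMatrix, hkl]

theorem nonneg [Semiring R] [PartialOrder R] [IsOrderedRing R] {γ : ι → R} {A : Matrix n n R}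
    (hγ : ∀ l, 0 ≤ γ l) (hA : ∀ i j, 0 ≤ A i j) (a b : ι × n) : 0 ≤ layeredMatrix γ A a b := by
  rw [layeredMatrix, of_apply]
  split_ifs
  exacts [mul_nonneg (hγ _) (hA _ _), hγ _, le_rfl]

end Entries

section Powers

variable {R ι n : Type*} [Ring R] [LinearOrder R] [IsStrictOrderedRing R]
  [DecidableEq ι] [DecidableEq n] {γ : ι → R} {A : Matrix n n R}

theorem pow_apply_same_layer_pos [Fintype ι] [Fintype n] (hγ : ∀ l, 0 < γ l)
    (hA : ∀ i j, 0 ≤ A i j) (l : ι) {k : ℕ} {i j : n} (h : 0 < (A ^ k) i j) :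
    0 < (layeredMatrix γ A ^ k) (l, i) (l, j) := by
  refine pow_apply_pos_of_map hA (nonneg (fun l ↦ (hγ l).le) hA) (f := Prod.mk l) ?_ h
  intro i j hij
  rw [apply_same_layer]
  exact mul_pos (hγ l) hij

theorem isIrreducible [Finite ι] [Finite n] (hγ : ∀ l, 0 < γ l) (hA : A.IsIrreducible) :
    (layeredMatrix γ A).IsIrreducible := by
  cases nonempty_fintype ι
  cases nonempty_fintype n
  have hnonneg := nonneg (fun l ↦ (hγ l).le) hA.nonneg
  rw [isIrreducible_iff_exists_pow_pos hnonneg]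
  rintro ⟨l, i⟩ ⟨k, j⟩
  obtain ⟨m, hm, hij⟩ := (isIrreducible_iff_exists_pow_pos hA.nonneg).1 hA i j
  have within_layer := pow_apply_same_layer_pos hγ hA.nonneg l hij
  rcases eq_or_ne k l with rfl | hkl
  · exact ⟨m, hm, within_layer⟩
  · have change_layer : 0 < (layeredMatrix γ A ^ 1) (l, j) (k, j) := by
      rw [pow_one, apply_of_ne_layer γ A hkl]
      exact hγ k
    exact ⟨m + 1, m.succ_pos, pow_add_apply_pos hnonneg within_layer change_layer⟩

end Powers

end layeredMatrix

theorem stmt3_general {R ι n : Type*} [Ring R] [LinearOrder R] [IsStrictOrderedRing R]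
    [Fintype ι] [DecidableEq ι] [Fintype n] [DecidableEq n] {A : Matrix n n R} {γ : ι → R}
    (hA : A.IsIrreducible) (hdiag : ∃ v, 0 < A v v) (hγ : ∀ l, 0 < γ l) :
    (layeredMatrix γ A).IsPrimitive := by
  have hirr := layeredMatrix.isIrreducible hγ hA
  obtain ⟨v, hv⟩ := hdiag
  rcases isEmpty_or_nonempty ι with _ | ⟨⟨l⟩⟩
  · exact ⟨hirr.nonneg, 1, one_pos, isEmptyElim⟩
  · refine isPrimitive_of_isIrreducible_of_apply_self_pos hirr (v := (l, v)) ?_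
    rw [layeredMatrix.apply_same_layer]
    exact mul_pos (hγ l) hv

/-- If `A` is row-stochastic, its directed graph is strongly
connected, it has a strictly positive diagonal entry, and all `γ l > 0` with
`∑ γ l = 1`, then the block matrix `At` is primitive: some power of `At` has
all entries strictly positive. -/
theorem stmt3 {n p : ℕ} (A : Matrix (Fin n) (Fin n) ℝ) (γ : Fin p → ℝ)
    (hA0 : ∀ i j, 0 ≤ A i j) (hA1 : ∀ i, ∑ j, A i j = 1)
    (hconn : ∀ i j : Fin n, ∃ m : ℕ, 1 ≤ m ∧ 0 < (A ^ m) i j)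
    (hdiag : ∃ i0 : Fin n, 0 < A i0 i0)
    (hγ : ∀ l, 0 < γ l) (hγ1 : ∑ l, γ l = 1)
    (At : Matrix (Fin p × Fin n) (Fin p × Fin n) ℝ)
    (hAt : ∀ li kj, At li kj =
      if kj.1 = li.1 then γ li.1 * A li.2 kj.2
      else if kj.2 = li.2 then γ kj.1 else 0) :
    ∃ m : ℕ, 1 ≤ m ∧ ∀ a b : Fin p × Fin n, 0 < (At ^ m) a b := by
  obtain rfl : At = layeredMatrix γ A := Matrix.ext fun li kj ↦ hAt li kj
  exact (stmt3_general ((isIrreducible_iff_exists_pow_pos hA0).2 hconn) hdiag hγ).exists_pos_pow
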